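/- arXiv:2410.02354 — 2 statements merged into one kernel-verified Lean document; each statement's English description precedes it below -/
import Mathlib

section
/- Foldy verification of the conservation of orbital, spin, and total angular momentum (part of the direction (ii) ⇒ (i) of the paper's main theorem, following Foldy 1956). In the Foldy setup, [L_i, H] = 0, [S_i, H] = 0, and therefore [J_i, H] = 0 for each i. -/
/-- The Levi-Civita symbol on `Fin 3`, valued in `ℂ`. -/
noncomputable def eps (i j k : Fin 3) : ℂ :=
  ((j.val : ℂ) - (i.val : ℂ)) * ((k.val : ℂ) - (j.val : ℂ)) * ((k.val : ℂ) - (i.val : ℂ)) / 2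

/-- The Kronecker delta on `Fin 3`, valued in `ℂ`. -/
noncomputable def kdelta (i j : Fin 3) : ℂ := if i = j then 1 else 0

/-! Since `ω` depends isotropically on the momenta alone, `⁅Q i, H⁆ = V * P i` with the same
factor `V` (`iℏ` times velocity over momentum) for every `i`. By the Leibniz rule
`⁅Q × P, H⁆ = ⁅Q, H⁆ × P = V (P × P)`, and `P × P` vanishes because the momenta commute. -/

theorem eps_swap_right (i j k : Fin 3) : eps i k j = -eps i j k := by
  unfold eps
  ring

theorem commute_of_mul_eq_one {M : Type*} [Monoid M] {a b c : M} (hab : a * b = 1)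
    (hba : b * a = 1) (hac : Commute a c) : Commute b c :=
  Commute.units_inv_left (u := ⟨a, b, hab, hba⟩) hac

section OperatorCross

variable {A : Type*} [NonUnitalRing A]

theorem mul_lie_leibniz (a b c : A) : ⁅a * b, c⁆ = a * ⁅b, c⁆ + ⁅a, c⁆ * b := by
  simp only [Ring.lie_def, mul_sub, sub_mul, mul_assoc]
  abel

theorem lie_mul_of_commute_left {a b c : A} (hab : Commute a b) : ⁅a, b * c⁆ = b * ⁅a, c⁆ := by
  rw [Ring.lie_def, Ring.lie_def, mul_sub, hab.left_comm, mul_assoc]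

variable [Module ℂ A]

/-- The cross product `X × Y` of two triples of operators, `(X × Y)_i = ε_{ijk} X_j Y_k`; the order
of the factors matters, as components need not commute. Orbital angular momentum is `Q × P`. -/
noncomputable def operatorCross (X Y : Fin 3 → A) (i : Fin 3) : A :=
  ∑ j, ∑ k, eps i j k • (X j * Y k)

theorem operatorCross_self_eq_zero {P : Fin 3 → A} (hP : ∀ i j, Commute (P i) (P j)) (i : Fin 3) :
    operatorCross P P i = 0 := by
  have self_eq_neg : operatorCross P P i = -operatorCross P P i := by
    calc operatorCross P P i
        = ∑ j, ∑ k, eps i k j • (P k * P j) := Finset.sum_comm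
      _ = ∑ j, ∑ k, -(eps i j k • (P j * P k)) := by
          refine Finset.sum_congr rfl fun j _ => Finset.sum_congr rfl fun k _ => ?_
          rw [eps_swap_right, neg_smul, (hP k j).eq]
      _ = -operatorCross P P i := by simp only [Finset.sum_neg_distrib, operatorCross]
  have two_smul_eq_zero : (2 : ℂ) • operatorCross P P i = 0 := by
    rw [two_smul, ← eq_neg_iff_add_eq_zero, ← self_eq_neg]
  exact (smul_eq_zero_iff_right two_ne_zero).1 two_smul_eq_zero

variable [SMulCommClass ℂ A A]

theorem operatorCross_mul_left (V : A) (X Y : Fin 3 → A) (i : Fin 3) :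
    operatorCross (fun j => V * X j) Y i = V * operatorCross X Y i := by
  simp only [operatorCross, Finset.mul_sum, mul_smul_comm, mul_assoc]

variable [IsScalarTower ℂ A A]

theorem operatorCross_lie (X Y : Fin 3 → A) (H : A) (i : Fin 3) :
    ⁅operatorCross X Y i, H⁆ =
      operatorCross X (fun k => ⁅Y k, H⁆) i + operatorCross (fun j => ⁅X j, H⁆) Y i := by
  calc ⁅operatorCross X Y i, H⁆
      = ∑ j, ∑ k, eps i j k • ⁅X j * Y k, H⁆ := by
        simp only [operatorCross, Ring.lie_def, Finset.sum_mul, Finset.mul_sum, smul_mul_assoc,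
          mul_smul_comm, smul_sub, Finset.sum_sub_distrib]
    _ = _ := by
        simp only [operatorCross, mul_lie_leibniz, smul_add, Finset.sum_add_distrib]

theorem operatorCross_lie_eq_zero {Q P : Fin 3 → A} {H V : A}
    (hPP : ∀ i j, Commute (P i) (P j)) (hPH : ∀ i, Commute (P i) H)
    (hQH : ∀ i, ⁅Q i, H⁆ = V * P i) (i : Fin 3) : ⁅operatorCross Q P i, H⁆ = 0 := by
  calc ⁅operatorCross Q P i, H⁆
      = operatorCross Q (fun _ => 0) i + operatorCross (fun j => V * P j) P i := by
        simp only [operatorCross_lie, (hPH _).lie_eq, hQH]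
    _ = V * operatorCross P P i := by
        rw [operatorCross_mul_left, operatorCross]
        simp only [mul_zero, smul_zero, Finset.sum_const_zero, zero_add]
    _ = 0 := by rw [operatorCross_self_eq_zero hPP, mul_zero]

theorem foldy_angular_momentum_conserved_general {Q P S : Fin 3 → A} {ω Λ V : A}
    (hPP : ∀ i j, ⁅P i, P j⁆ = 0)
    (hΛQ : ∀ i, ⁅Λ, Q i⁆ = 0) (hΛP : ∀ i, ⁅Λ, P i⁆ = 0) (hΛS : ∀ i, ⁅Λ, S i⁆ = 0)
    (hωP : ∀ i, ⁅ω, P i⁆ = 0) (hωS : ∀ i, ⁅ω, S i⁆ = 0)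
    (hQω : ∀ i, ⁅Q i, ω⁆ = V * P i) (i : Fin 3) :
    ⁅operatorCross Q P i, Λ * ω⁆ = 0 ∧ ⁅S i, Λ * ω⁆ = 0 ∧
      ⁅operatorCross Q P i + S i, Λ * ω⁆ = 0 := by
  simp only [← commute_iff_lie_eq] at hPP hΛQ hΛP hΛS hωP hωS ⊢
  have hPH (k : Fin 3) : Commute (P k) (Λ * ω) := ((hΛP k).mul_left (hωP k)).symm
  have hSH : Commute (S i) (Λ * ω) := ((hΛS i).mul_left (hωS i)).symm
  have hQH (k : Fin 3) : ⁅Q k, Λ * ω⁆ = Λ * V * P k := by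
    rw [lie_mul_of_commute_left (hΛQ k).symm, hQω, mul_assoc]
  have hLH : Commute (operatorCross Q P i) (Λ * ω) :=
    commute_iff_lie_eq.2 (operatorCross_lie_eq_zero hPP hPH hQH i)
  exact ⟨hLH, hSH, hLH.add_left hSH⟩

end OperatorCross

/-- Foldy verification of the conservation of orbital, spin,
and total angular momentum. In the Foldy setup, `[L i, H] = 0`,
`[S i, H] = 0`, and therefore `[J i, H] = 0`. -/
theorem foldy_angular_momentum_conserved
    {A : Type*} [Ring A] [Algebra ℂ A] (ℏ : ℝ) (hℏ : ℏ ≠ 0)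
    (m t : ℝ) (hm : 0 < m)
    (Q P S : Fin 3 → A) (ω ωinv Λ R : A)
    (hQQ : ∀ i j, ⁅Q i, Q j⁆ = 0)
    (hPP : ∀ i j, ⁅P i, P j⁆ = 0)
    (hQP : ∀ i j, ⁅Q i, P j⁆ = (Complex.I * (ℏ : ℂ) * kdelta i j) • (1 : A))
    (hSS : ∀ i j, ⁅S i, S j⁆ = (Complex.I * (ℏ : ℂ)) • ∑ k, eps i j k • S k)
    (hQS : ∀ i j, ⁅Q i, S j⁆ = 0)
    (hPS : ∀ i j, ⁅P i, S j⁆ = 0)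
    (hΛΛ : Λ * Λ = 1)
    (hΛQ : ∀ i, ⁅Λ, Q i⁆ = 0)
    (hΛP : ∀ i, ⁅Λ, P i⁆ = 0)
    (hΛS : ∀ i, ⁅Λ, S i⁆ = 0)
    (hΛω : ⁅Λ, ω⁆ = 0)
    (hωinv1 : ω * ωinv = 1) (hωinv2 : ωinv * ω = 1)
    (hωP : ∀ i, ⁅ω, P i⁆ = 0)
    (hωS : ∀ i, ⁅ω, S i⁆ = 0)
    (hω2 : ω * ω = P 0 * P 0 + P 1 * P 1 + P 2 * P 2 + ((m : ℂ) ^ 2) • (1 : A))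
    (hQω : ∀ i, ⁅Q i, ω⁆ = (Complex.I * (ℏ : ℂ)) • (P i * ωinv))
    (hR1 : (ω + (m : ℂ) • (1 : A)) * R = 1)
    (hR2 : R * (ω + (m : ℂ) • (1 : A)) = 1)
    (H : A) (L J N M K : Fin 3 → A)
    (hH : H = Λ * ω)
    (hL : ∀ i, L i = ∑ j, ∑ k, eps i j k • (Q j * P k))
    (hJ : ∀ i, J i = L i + S i)
    (hN : ∀ i, N i = Λ * (∑ j, ∑ k, eps i j k • (S j * P k)) * R)
    (hM : ∀ i, M i = (t : ℂ) • P i - (2 : ℂ)⁻¹ • (Q i * H + H * Q i))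
    (hK : ∀ i, K i = M i + N i)
    :
    ∀ i, ⁅L i, H⁆ = 0 ∧ ⁅S i, H⁆ = 0 ∧ ⁅J i, H⁆ = 0 := by
  have hQω_left (i : Fin 3) : ⁅Q i, ω⁆ = ((Complex.I * (ℏ : ℂ)) • ωinv) * P i := by
    rw [hQω, smul_mul_assoc,
      (commute_of_mul_eq_one hωinv1 hωinv2 (commute_iff_lie_eq.2 (hωP i))).eq]
  simpa only [hJ, hL, hH, operatorCross] using
    foldy_angular_momentum_conserved_general hPP hΛQ hΛP hΛS hωP hωS hQω_left
end

section
/- Foldy verification of the Poincaré relation between the boost generators (the central computation in the direction (ii) ⇒ (i) of the paper's main theorem, following Foldy 1956). In the Foldy setup, [K_i, K_j] = −iℏ·ε_{ijk}J_k for all i, j. -/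
/-!
For vectors of operators the self cross product collects the commutators,
`(x ×ₒ x) k = ⁅x (k + 1), x (k + 2)⁆` with indices modulo `3`, so the spin algebra reads
`S ×ₒ S = c • S` and the claim reads `K ×ₒ K = -(c • J)`, where `c = iℏ`.

Since `Λ` is a central involution and `⁅P i, X j⁆` is symmetric in `i, j`, the boost
`K = t P - Λ X` has the same self cross product as `X = Y - Z`, where
`Y = ω Q + a P ω⁻¹` and `Z = (S ×ₒ P) R`. The orbital part gives `Y ×ₒ Y = -(c • Q ×ₒ P)`. The
mixed terms and `Z ×ₒ Z` both produce the term `(S ⬝ᵥ P) P R²`, which cancels, and the remaining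
multiple of `S` is fixed by the mass shell: `2 ω R - P² R² = 1`, because `P² = (ω - m) (ω + m)`.
-/

section Commutator

variable {A : Type*} [Ring A]

lemma lie_mul_eq (x y z : A) : ⁅x, y * z⁆ = ⁅x, y⁆ * z + y * ⁅x, z⁆ := by
  simp only [Ring.lie_def]; noncomm_ring

lemma lie_units_inv (x : A) (u : Aˣ) : ⁅x, (↑u⁻¹ : A)⁆ = -(↑u⁻¹ * ⁅x, (u : A)⁆ * ↑u⁻¹) := by
  simp only [Ring.lie_def, mul_sub, sub_mul, mul_assoc, u.mul_inv, mul_one, u.inv_mul_cancel_left]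
  abel

lemma lie_mul_left_of_commute {w y : A} (x : A) (hwy : Commute w y) :
    ⁅w * x, y⁆ = w * ⁅x, y⁆ := by
  rw [Ring.lie_def, Ring.lie_def, mul_sub, mul_assoc, hwy.left_comm]

lemma lie_mul_mul_of_commute {a b p q : A} (haq : Commute a q) (hbp : Commute b p)
    (hpq : Commute p q) : ⁅a * p, b * q⁆ = ⁅a, b⁆ * (p * q) := by
  rw [Ring.lie_def, Ring.lie_def, sub_mul, hbp.symm.mul_mul_mul_comm, haq.symm.mul_mul_mul_comm,
    hpq.eq]

lemma lie_mul_left_mul_left_of_commute (w : A) {x y : A} (hxy : Commute x y) :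
    ⁅w * x, w * y⁆ = w * (⁅x, w⁆ * y - ⁅y, w⁆ * x) := by
  have hyx : w * (w * (x * y)) = w * (w * (y * x)) := by rw [hxy.eq]
  simp only [Ring.lie_def, mul_sub, sub_mul, mul_assoc, hyx]
  abel

end Commutator

/-- The cross product of two vectors with entries in a possibly noncommutative ring, with indices
read modulo `3`; the factors keep their order, so `x ×ₒ x` need not vanish. -/
def opCross {A : Type*} [Ring A] (x y : Fin 3 → A) (i : Fin 3) : A :=
  x (i + 1) * y (i + 2) - x (i + 2) * y (i + 1)

local infixl:74 " ×ₒ " => opCross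

section OpCross

open Matrix

attribute [local instance] LieRing.ofAssociativeRing

variable {A : Type*} [Ring A]

lemma dotProduct_eq_cyclic_sum (x y : Fin 3 → A) (i : Fin 3) :
    x ⬝ᵥ y = x i * y i + x (i + 1) * y (i + 1) + x (i + 2) * y (i + 2) := by
  rw [vec3_dotProduct]
  fin_cases i <;>
    simp only [Fin.zero_eta, Fin.mk_one, Fin.reduceFinMk, Fin.reduceAdd, zero_add] <;> abel

lemma opCross_apply (x y : Fin 3 → A) (i : Fin 3) :
    (x ×ₒ y) i = x (i + 1) * y (i + 2) - x (i + 2) * y (i + 1) := rfl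

lemma opCross_add_one (x y : Fin 3 → A) (i : Fin 3) :
    (x ×ₒ y) (i + 1) = x (i + 2) * y i - x i * y (i + 2) := by
  fin_cases i <;> rfl

lemma opCross_add_two (x y : Fin 3 → A) (i : Fin 3) :
    (x ×ₒ y) (i + 2) = x i * y (i + 1) - x (i + 1) * y i := by
  fin_cases i <;> rfl

lemma opCross_self_apply (x : Fin 3 → A) (i : Fin 3) :
    (x ×ₒ x) i = ⁅x (i + 1), x (i + 2)⁆ := rfl

lemma opCross_add_opCross_apply (x y : Fin 3 → A) (i : Fin 3) :
    (x ×ₒ y + y ×ₒ x) i = ⁅x (i + 1), y (i + 2)⁆ - ⁅x (i + 2), y (i + 1)⁆ := by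
  simp only [opCross, Pi.add_apply, Ring.lie_def]; abel

lemma opCross_sub_self (x y : Fin 3 → A) :
    (x - y) ×ₒ (x - y) = x ×ₒ x - (x ×ₒ y + y ×ₒ x) + y ×ₒ y := by
  ext i
  simp only [opCross, Pi.add_apply, Pi.sub_apply, mul_sub, sub_mul]; abel

lemma opCross_opCross_of_commute {y z : Fin 3 → A} (x : Fin 3 → A)
    (hyz : ∀ i j, Commute (y i) (z j)) (i : Fin 3) :
    ((x ×ₒ y) ×ₒ z) i = (x ⬝ᵥ z) * y i - x i * (y ⬝ᵥ z) := by
  rw [opCross_apply, opCross_add_one, opCross_add_two, dotProduct_eq_cyclic_sum x z i,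
    dotProduct_eq_cyclic_sum y z i]
  simp only [sub_mul, add_mul, mul_add, mul_assoc, (hyz i _).eq]
  abel

lemma opCross_opCross_self_of_commute {x y : Fin 3 → A} (hxy : ∀ i j, Commute (x i) (y j))
    (hyy : ∀ i j, Commute (y i) (y j)) (i : Fin 3) :
    ((x ×ₒ y) ×ₒ (x ×ₒ y)) i = (x ×ₒ x ⬝ᵥ y) * y i := by
  have hlie (a b j k : Fin 3) : ⁅x a * y j, x b * y k⁆ = ⁅x a, x b⁆ * (y j * y k) :=
    lie_mul_mul_of_commute (hxy _ _) (hxy _ _) (hyy _ _)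
  rw [opCross_self_apply, opCross_add_one, opCross_add_two, dotProduct_eq_cyclic_sum _ _ i,
    opCross_add_one, opCross_add_two, opCross_self_apply]
  simp only [lie_sub, sub_lie, hlie, lie_self, zero_mul]
  simp only [Ring.lie_def, (hyy _ i).eq, add_mul, sub_mul, mul_assoc]
  abel

lemma commute_opCross {a : A} {x y : Fin 3 → A} (hx : ∀ i, Commute a (x i))
    (hy : ∀ i, Commute a (y i)) (i : Fin 3) : Commute a ((x ×ₒ y) i) :=
  ((hx _).mul_right (hy _)).sub_right ((hx _).mul_right (hy _))

variable {𝕜 : Type*} [CommRing 𝕜] [Algebra 𝕜 A]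

lemma opCross_smul_sub_mul_self {p x : Fin 3 → A} {Λ : A} (t : 𝕜) (hΛ : Λ * Λ = 1)
    (hΛp : ∀ i, Commute Λ (p i)) (hΛx : ∀ i, Commute Λ (x i)) (hpp : p ×ₒ p = 0)
    (hxp : x ×ₒ p + p ×ₒ x = 0) :
    (fun i ↦ t • p i - Λ * x i) ×ₒ (fun i ↦ t • p i - Λ * x i) = x ×ₒ x := by
  have hpΛ (i : Fin 3) (y : A) : p i * (Λ * y) = Λ * (p i * y) := (hΛp i).symm.left_comm y
  have hxΛ (i : Fin 3) (y : A) : x i * (Λ * y) = Λ * (x i * y) := (hΛx i).symm.left_comm y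
  have hΛΛ (y : A) : Λ * (Λ * y) = y := by rw [← mul_assoc, hΛ, one_mul]
  ext i
  have hpp_i : (p ×ₒ p) i = 0 := congrFun hpp i
  have hxp_i : (x ×ₒ p + p ×ₒ x) i = 0 := congrFun hxp i
  calc ((fun i ↦ t • p i - Λ * x i) ×ₒ fun i ↦ t • p i - Λ * x i) i
      = (t * t) • (p ×ₒ p) i - t • (Λ * (x ×ₒ p + p ×ₒ x) i) + (x ×ₒ x) i := by
        simp only [opCross, Pi.add_apply, mul_sub, sub_mul, mul_add, smul_mul_assoc,
          mul_smul_comm, mul_assoc, hpΛ, hxΛ, hΛΛ]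
        module
    _ = (x ×ₒ x) i := by rw [hpp_i, hxp_i, mul_zero, smul_zero, smul_zero, sub_zero, zero_add]

end OpCross

section LeviCivita

variable {A : Type*} [Ring A] [Algebra ℂ A]

lemma sum_eps_smul_mul (x y : Fin 3 → A) (i : Fin 3) :
    ∑ j, ∑ k, eps i j k • (x j * y k) = (x ×ₒ y) i := by
  fin_cases i <;> simp [Fin.sum_univ_three, eps, opCross] <;> module

lemma lie_eq_smul_sum_eps_iff {x z : Fin 3 → A} {c : ℂ} :
    (∀ i j, ⁅x i, x j⁆ = c • ∑ k, eps i j k • z k) ↔ x ×ₒ x = c • z := by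
  constructor
  · intro h
    ext i
    rw [opCross_self_apply, h, Pi.smul_apply]
    congr 1
    fin_cases i <;> simp [Fin.sum_univ_three, eps] <;> module
  · intro h i j
    have h_apply (k : Fin 3) : c • z k = (x ×ₒ x) k := (congrFun h k).symm
    simp only [Finset.smul_sum, smul_comm c, h_apply]
    fin_cases i <;> fin_cases j <;>
      simp [Fin.sum_univ_three, eps, opCross, Ring.lie_def] <;> module

end LeviCivita

open Matrix in
/-- The operators of Foldy's representation of a massive spinning particle: positions `Q`, momenta
`P`, spins `S`, the sign of energy `Λ` and the kinetic energy `ω`, with `c` playing the role of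
`iℏ`. The inverses occurring in the boosts are encoded by units, `D` being `ω + m`. -/
structure FoldySystem {𝕜 : Type*} [CommRing 𝕜] (A : Type*) [Ring A] [Algebra 𝕜 A] (c m : 𝕜) where
  (Q P S : Fin 3 → A)
  Λ : A
  (ω D : Aˣ)
  commute_Q_Q : ∀ i j, Commute (Q i) (Q j)
  commute_P_P : ∀ i j, Commute (P i) (P j)
  lie_Q_P : ∀ i j, ⁅Q i, P j⁆ = (if i = j then c else 0) • (1 : A)
  opCross_S_S : S ×ₒ S = c • S
  commute_Q_S : ∀ i j, Commute (Q i) (S j)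
  commute_P_S : ∀ i j, Commute (P i) (S j)
  Λ_mul_self : Λ * Λ = 1
  commute_Λ_Q : ∀ i, Commute Λ (Q i)
  commute_Λ_P : ∀ i, Commute Λ (P i)
  commute_Λ_S : ∀ i, Commute Λ (S i)
  commute_Λ_ω : Commute Λ ω
  commute_ω_P : ∀ i, Commute (ω : A) (P i)
  commute_ω_S : ∀ i, Commute (ω : A) (S i)
  ω_mul_self : (ω : A) * ω = P ⬝ᵥ P + (m ^ 2) • (1 : A)
  lie_Q_ω : ∀ i, ⁅Q i, (ω : A)⁆ = c • (P i * ↑ω⁻¹)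
  D_eq : (D : A) = ω + m • (1 : A)

namespace FoldySystem

open Matrix

attribute [local instance] LieRing.ofAssociativeRing

variable {𝕜 A : Type*} [CommRing 𝕜] [Ring A] [Algebra 𝕜 A] {c m : 𝕜} (F : FoldySystem A c m)

/-- The orbital part `Y = ω Q + a P ω⁻¹` of a boost. Since `P ω⁻¹` is proportional to `⁅Q, ω⁆`,
the parameter `a` records the ordering of `Q` and `ω`; it is `c / 2` for the symmetric one. -/
def orbitalBoost (a : 𝕜) (i : Fin 3) : A := F.ω * F.Q i + a • (F.P i * ↑F.ω⁻¹)

/-- The spin part `Z = (S ×ₒ P) (ω + m)⁻¹` of a boost. -/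
def spinBoost (i : Fin 3) : A := (F.S ×ₒ F.P) i * ↑F.D⁻¹

/-- The time-independent part `X = Y - Z` of a boost, stripped of the sign of energy. -/
def reducedBoost (a : 𝕜) : Fin 3 → A := F.orbitalBoost a - F.spinBoost

/-- The generator `K = t P - Λ X` of Lorentz boosts at time `t`. -/
def boost (t a : 𝕜) (i : Fin 3) : A := t • F.P i - F.Λ * F.reducedBoost a i

/-- The total angular momentum `J`, orbital plus spin. -/
def angularMomentum : Fin 3 → A := F.Q ×ₒ F.P + F.S

lemma commute_S_P (i j : Fin 3) : Commute (F.S i) (F.P j) := (F.commute_P_S j i).symm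

lemma commute_D {x : A} (hx : Commute x F.ω) : Commute x F.D := by
  rw [F.D_eq]
  exact hx.add_right ((Commute.one_right x).smul_right m)

lemma commute_P_inv_ω (i : Fin 3) : Commute (F.P i) ↑F.ω⁻¹ :=
  (F.commute_ω_P i).symm.units_inv_right

lemma commute_ω_P_mul_inv_ω (i : Fin 3) : Commute (F.ω : A) (F.P i * ↑F.ω⁻¹) :=
  (F.commute_ω_P i).mul_right (Commute.refl _).units_inv_right

lemma commute_ω_inv_D : Commute (F.ω : A) ↑F.D⁻¹ :=
  (F.commute_D (Commute.refl _)).units_inv_right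

lemma commute_P_inv_D (i : Fin 3) : Commute (F.P i) ↑F.D⁻¹ :=
  (F.commute_D (F.commute_ω_P i).symm).units_inv_right

lemma commute_S_inv_D (i : Fin 3) : Commute (F.S i) ↑F.D⁻¹ :=
  (F.commute_D (F.commute_ω_S i).symm).units_inv_right

lemma commute_opCross_S_P_inv_D (i : Fin 3) : Commute ((F.S ×ₒ F.P) i) ↑F.D⁻¹ :=
  (commute_opCross (fun j ↦ (F.commute_S_inv_D j).symm)
    (fun j ↦ (F.commute_P_inv_D j).symm) i).symm

lemma commute_P_spinBoost (i j : Fin 3) : Commute (F.P i) (F.spinBoost j) :=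
  (commute_opCross (F.commute_P_S i) (F.commute_P_P i) j).mul_right (F.commute_P_inv_D i)

lemma commute_ω_spinBoost (j : Fin 3) : Commute (F.ω : A) (F.spinBoost j) :=
  (commute_opCross F.commute_ω_S F.commute_ω_P j).mul_right F.commute_ω_inv_D

lemma lie_Q_P_comm (i j : Fin 3) : ⁅F.Q i, F.P j⁆ = ⁅F.Q j, F.P i⁆ := by
  simp only [F.lie_Q_P, eq_comm]

lemma lie_Q_inv_ω (i : Fin 3) :
    ⁅F.Q i, (↑F.ω⁻¹ : A)⁆ = -(c • (F.P i * (↑F.ω⁻¹ * ↑F.ω⁻¹ * ↑F.ω⁻¹))) := by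
  rw [lie_units_inv, F.lie_Q_ω, mul_smul_comm, smul_mul_assoc,
    ← (F.commute_P_inv_ω i).left_comm, mul_assoc, mul_assoc]

lemma lie_Q_inv_D (i : Fin 3) :
    ⁅F.Q i, (↑F.D⁻¹ : A)⁆ = -(c • (F.P i * (↑F.ω⁻¹ * ↑F.D⁻¹ * ↑F.D⁻¹))) := by
  have hD : ⁅F.Q i, (F.D : A)⁆ = c • (F.P i * ↑F.ω⁻¹) := by
    rw [F.D_eq, lie_add, lie_smul m, (Commute.one_right (F.Q i)).lie_eq, smul_zero, add_zero,
      F.lie_Q_ω]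
  rw [lie_units_inv, hD, mul_smul_comm, smul_mul_assoc, ← (F.commute_P_inv_D i).left_comm,
    ← F.commute_ω_inv_D.units_inv_left.eq, mul_assoc]

lemma lie_Q_P_mul_inv_ω_comm (i j : Fin 3) :
    ⁅F.Q i, F.P j * ↑F.ω⁻¹⁆ = ⁅F.Q j, F.P i * ↑F.ω⁻¹⁆ := by
  rw [lie_mul_eq, lie_mul_eq, F.lie_Q_P_comm, F.lie_Q_inv_ω, F.lie_Q_inv_ω, mul_neg, mul_neg,
    mul_smul_comm, mul_smul_comm, (F.commute_P_P i j).left_comm]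

lemma lie_orbitalBoost (a : 𝕜) (i j : Fin 3) :
    ⁅F.orbitalBoost a i, F.orbitalBoost a j⁆ = c • (F.P i * F.Q j - F.P j * F.Q i) := by
  have hQQ : ⁅F.ω * F.Q i, F.ω * F.Q j⁆ = c • (F.P i * F.Q j - F.P j * F.Q i) := by
    have hcancel (k : Fin 3) (x : A) : F.ω * (F.P k * ↑F.ω⁻¹ * x) = F.P k * x := by
      rw [mul_assoc, (F.commute_ω_P k).left_comm, F.ω.mul_inv_cancel_left]
    rw [lie_mul_left_mul_left_of_commute _ (F.commute_Q_Q i j), F.lie_Q_ω, F.lie_Q_ω, mul_sub,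
      smul_mul_assoc, smul_mul_assoc, mul_smul_comm, mul_smul_comm, hcancel, hcancel, smul_sub]
  have hQP : ⁅F.ω * F.Q i, F.P j * ↑F.ω⁻¹⁆ = ⁅F.ω * F.Q j, F.P i * ↑F.ω⁻¹⁆ := by
    rw [lie_mul_left_of_commute _ (F.commute_ω_P_mul_inv_ω j), F.lie_Q_P_mul_inv_ω_comm,
      lie_mul_left_of_commute _ (F.commute_ω_P_mul_inv_ω i)]
  have hPP : ⁅F.P i * (↑F.ω⁻¹ : A), F.P j * ↑F.ω⁻¹⁆ = 0 :=
    (((F.commute_P_P i j).mul_right (F.commute_P_inv_ω i)).mul_left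
      ((F.commute_P_inv_ω j).symm.mul_right (Commute.refl _))).lie_eq
  simp only [orbitalBoost, lie_add, add_lie, lie_smul a, smul_lie, hQQ, hPP, smul_zero]
  rw [hQP, ← lie_skew (F.ω * F.Q j)]
  module

lemma opCross_orbitalBoost_self (a : 𝕜) :
    F.orbitalBoost a ×ₒ F.orbitalBoost a = -(c • F.Q ×ₒ F.P) := by
  ext i
  have hQP := F.lie_Q_P_comm (i + 1) (i + 2)
  rw [Ring.lie_def, Ring.lie_def, sub_eq_sub_iff_add_eq_add] at hQP
  rw [opCross_self_apply, lie_orbitalBoost, Pi.neg_apply, Pi.smul_apply, opCross, ← smul_neg,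
    neg_sub]
  congr 1
  rw [sub_eq_sub_iff_add_eq_add, add_comm, hQP, add_comm]

lemma lie_orbitalBoost_spinBoost (a : 𝕜) (i j : Fin 3) :
    ⁅F.orbitalBoost a i, F.spinBoost j⁆ = F.ω * ⁅F.Q i, (F.S ×ₒ F.P) j⁆ * ↑F.D⁻¹
      - c • ((F.S ×ₒ F.P) j * F.P i * (↑F.D⁻¹ * ↑F.D⁻¹)) := by
  have hPZ : ⁅F.P i * (↑F.ω⁻¹ : A), F.spinBoost j⁆ = 0 :=
    ((F.commute_P_spinBoost i j).mul_left (F.commute_ω_spinBoost j).units_inv_left).lie_eq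
  have hcancel : (F.ω : A) * ((F.S ×ₒ F.P) j * (F.P i * (↑F.ω⁻¹ * ↑F.D⁻¹ * ↑F.D⁻¹))) =
      (F.S ×ₒ F.P) j * F.P i * (↑F.D⁻¹ * ↑F.D⁻¹) := by
    rw [(commute_opCross F.commute_ω_S F.commute_ω_P j).left_comm, (F.commute_ω_P i).left_comm,
      mul_assoc, F.ω.mul_inv_cancel_left, mul_assoc]
  rw [orbitalBoost, add_lie, smul_lie, hPZ, smul_zero, add_zero,
    lie_mul_left_of_commute _ (F.commute_ω_spinBoost j), spinBoost, lie_mul_eq, F.lie_Q_inv_D,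
    mul_neg, mul_smul_comm, mul_add, mul_neg, mul_smul_comm, hcancel, ← sub_eq_add_neg,
    ← mul_assoc (F.ω : A)]

lemma opCross_Q_add_opCross_Q :
    F.Q ×ₒ (F.S ×ₒ F.P) + (F.S ×ₒ F.P) ×ₒ F.Q = (2 * c) • F.S := by
  have hQSP (i j k : Fin 3) : ⁅F.Q i, F.S j * F.P k⁆ = (if i = k then c else 0) • F.S j := by
    rw [lie_mul_eq, (F.commute_Q_S i j).lie_eq, zero_mul, zero_add, F.lie_Q_P, mul_smul_comm,
      mul_one]
  ext i
  rw [opCross_add_opCross_apply, opCross_add_one, opCross_add_two]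
  simp only [lie_sub, hQSP, ↓reduceIte, add_eq_left, one_ne_zero, zero_smul, sub_zero,
    Fin.reduceEq, zero_sub, sub_neg_eq_add, Pi.smul_apply]
  module

lemma opCross_orbitalBoost_spinBoost_add (a : 𝕜) (i : Fin 3) :
    (F.orbitalBoost a ×ₒ F.spinBoost + F.spinBoost ×ₒ F.orbitalBoost a) i =
      (2 * c) • (F.S i * (F.ω * ↑F.D⁻¹))
        + c • (((F.S ×ₒ F.P) ×ₒ F.P) i * (↑F.D⁻¹ * ↑F.D⁻¹)) := by
  have hQF : ⁅F.Q (i + 1), (F.S ×ₒ F.P) (i + 2)⁆ - ⁅F.Q (i + 2), (F.S ×ₒ F.P) (i + 1)⁆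
      = (2 * c) • F.S i := by
    rw [← opCross_add_opCross_apply, F.opCross_Q_add_opCross_Q, Pi.smul_apply]
  rw [opCross_add_opCross_apply, F.lie_orbitalBoost_spinBoost, F.lie_orbitalBoost_spinBoost,
    sub_sub_sub_comm, ← sub_mul, ← mul_sub, hQF, opCross_apply (F.S ×ₒ F.P), sub_mul, smul_sub,
    mul_smul_comm, smul_mul_assoc, (F.commute_ω_S i).eq, mul_assoc]
  abel

lemma opCross_spinBoost_self (i : Fin 3) :
    (F.spinBoost ×ₒ F.spinBoost) i = c • ((F.S ⬝ᵥ F.P) * F.P i * (↑F.D⁻¹ * ↑F.D⁻¹)) := by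
  have hlie (j k : Fin 3) : ⁅F.spinBoost j, F.spinBoost k⁆ =
      ⁅(F.S ×ₒ F.P) j, (F.S ×ₒ F.P) k⁆ * (↑F.D⁻¹ * ↑F.D⁻¹) :=
    lie_mul_mul_of_commute (F.commute_opCross_S_P_inv_D j) (F.commute_opCross_S_P_inv_D k)
      (Commute.refl _)
  rw [opCross_self_apply, hlie, ← opCross_self_apply,
    opCross_opCross_self_of_commute F.commute_S_P F.commute_P_P, F.opCross_S_S, smul_dotProduct,
    smul_mul_assoc, smul_mul_assoc]

lemma mass_shell :
    2 • ((F.ω : A) * ↑F.D⁻¹) - (F.P ⬝ᵥ F.P) * (↑F.D⁻¹ * ↑F.D⁻¹) = 1 := by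
  have hfactor : F.P ⬝ᵥ F.P = (2 • (F.ω : A) - F.D) * F.D := by
    rw [eq_sub_of_add_eq F.ω_mul_self.symm, F.D_eq]
    simp only [two_smul, add_mul, sub_mul, mul_add, smul_mul_assoc, mul_smul_comm, one_mul,
      mul_one]
    module
  rw [hfactor, mul_assoc, F.D.mul_inv_cancel_left, sub_mul, F.D.mul_inv, smul_mul_assoc,
    sub_sub_cancel]

lemma opCross_reducedBoost_self (a : 𝕜) :
    F.reducedBoost a ×ₒ F.reducedBoost a = -(c • F.angularMomentum) := by
  ext i
  have hshell : 2 • (F.S i * (F.ω * ↑F.D⁻¹)) - F.S i * ((F.P ⬝ᵥ F.P) * (↑F.D⁻¹ * ↑F.D⁻¹)) =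
      F.S i := by
    rw [← mul_smul_comm, ← mul_sub, F.mass_shell, mul_one]
  rw [reducedBoost, opCross_sub_self, Pi.add_apply, Pi.sub_apply, F.opCross_orbitalBoost_self,
    F.opCross_orbitalBoost_spinBoost_add, F.opCross_spinBoost_self,
    opCross_opCross_of_commute F.S F.commute_P_P, angularMomentum]
  simp only [Pi.neg_apply, Pi.smul_apply, Pi.add_apply, sub_mul, mul_assoc]
  linear_combination (norm := module) -c • hshell

lemma lie_reducedBoost_P (a : 𝕜) (i j : Fin 3) :
    ⁅F.reducedBoost a i, F.P j⁆ = F.ω * ⁅F.Q i, F.P j⁆ := by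
  have hPP : ⁅F.P i * (↑F.ω⁻¹ : A), F.P j⁆ = 0 :=
    ((F.commute_P_P i j).mul_left (F.commute_P_inv_ω j).symm).lie_eq
  have hZP : ⁅F.spinBoost i, F.P j⁆ = 0 := (F.commute_P_spinBoost j i).symm.lie_eq
  rw [reducedBoost, Pi.sub_apply, sub_lie, hZP, sub_zero, orbitalBoost, add_lie, smul_lie, hPP,
    smul_zero, add_zero, lie_mul_left_of_commute _ (F.commute_ω_P j)]

lemma opCross_reducedBoost_P_add (a : 𝕜) :
    F.reducedBoost a ×ₒ F.P + F.P ×ₒ F.reducedBoost a = 0 := by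
  ext i
  rw [opCross_add_opCross_apply, F.lie_reducedBoost_P, F.lie_reducedBoost_P, F.lie_Q_P_comm,
    sub_self, Pi.zero_apply]

lemma opCross_P_self : F.P ×ₒ F.P = 0 := by
  ext i
  exact (F.commute_P_P _ _).lie_eq

lemma commute_Λ_reducedBoost (a : 𝕜) (i : Fin 3) : Commute F.Λ (F.reducedBoost a i) :=
  ((F.commute_Λ_ω.mul_right (F.commute_Λ_Q i)).add_right
    (((F.commute_Λ_P i).mul_right F.commute_Λ_ω.units_inv_right).smul_right a)).sub_right
      ((commute_opCross F.commute_Λ_S F.commute_Λ_P i).mul_right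
        (F.commute_D F.commute_Λ_ω).units_inv_right)

lemma boost_half_eq {𝕜 : Type*} [Field 𝕜] [NeZero (2 : 𝕜)] [Algebra 𝕜 A] {c m : 𝕜}
    (F : FoldySystem A c m) (t : 𝕜) (i : Fin 3) :
    F.boost t (c / 2) i =
      t • F.P i - (2 : 𝕜)⁻¹ • (F.Q i * (F.Λ * F.ω) + F.Λ * F.ω * F.Q i)
        + F.Λ * (F.S ×ₒ F.P) i * ↑F.D⁻¹ := by
  have hQω : F.Q i * (F.Λ * F.ω) = F.Λ * (F.ω * F.Q i) + c • (F.Λ * (F.P i * ↑F.ω⁻¹)) := by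
    have hlie := F.lie_Q_ω i
    rw [Ring.lie_def, sub_eq_iff_eq_add'] at hlie
    rw [← (F.commute_Λ_Q i).left_comm, hlie, mul_add, mul_smul_comm]
  have htwo : (2 : 𝕜) ≠ 0 := NeZero.ne 2
  rw [hQω, boost, reducedBoost, Pi.sub_apply, orbitalBoost, spinBoost]
  simp only [mul_sub, mul_add, mul_smul_comm, mul_assoc]
  match_scalars <;> field_simp
  norm_num

end FoldySystem

theorem foldy_boost_boost_relation_general {𝕜 A : Type*} [CommRing 𝕜] [Ring A] [Algebra 𝕜 A]
    {c m : 𝕜} (F : FoldySystem A c m) (t a : 𝕜) :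
    F.boost t a ×ₒ F.boost t a = -(c • F.angularMomentum) :=
  (opCross_smul_sub_mul_self t F.Λ_mul_self F.commute_Λ_P (F.commute_Λ_reducedBoost a)
    F.opCross_P_self (F.opCross_reducedBoost_P_add a)).trans (F.opCross_reducedBoost_self a)

/-- Foldy verification of the Poincaré relation between the
boost generators. In the Foldy setup, `[K i, K j] = -iℏ ε_{ijk} • J k`. -/
theorem foldy_boost_boost_relation
    {A : Type*} [Ring A] [Algebra ℂ A] (ℏ : ℝ) (hℏ : ℏ ≠ 0)
    (m t : ℝ) (hm : 0 < m)
    (Q P S : Fin 3 → A) (ω ωinv Λ R : A)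
    (hQQ : ∀ i j, ⁅Q i, Q j⁆ = 0)
    (hPP : ∀ i j, ⁅P i, P j⁆ = 0)
    (hQP : ∀ i j, ⁅Q i, P j⁆ = (Complex.I * (ℏ : ℂ) * kdelta i j) • (1 : A))
    (hSS : ∀ i j, ⁅S i, S j⁆ = (Complex.I * (ℏ : ℂ)) • ∑ k, eps i j k • S k)
    (hQS : ∀ i j, ⁅Q i, S j⁆ = 0)
    (hPS : ∀ i j, ⁅P i, S j⁆ = 0)
    (hΛΛ : Λ * Λ = 1)
    (hΛQ : ∀ i, ⁅Λ, Q i⁆ = 0)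
    (hΛP : ∀ i, ⁅Λ, P i⁆ = 0)
    (hΛS : ∀ i, ⁅Λ, S i⁆ = 0)
    (hΛω : ⁅Λ, ω⁆ = 0)
    (hωinv1 : ω * ωinv = 1) (hωinv2 : ωinv * ω = 1)
    (hωP : ∀ i, ⁅ω, P i⁆ = 0)
    (hωS : ∀ i, ⁅ω, S i⁆ = 0)
    (hω2 : ω * ω = P 0 * P 0 + P 1 * P 1 + P 2 * P 2 + ((m : ℂ) ^ 2) • (1 : A))
    (hQω : ∀ i, ⁅Q i, ω⁆ = (Complex.I * (ℏ : ℂ)) • (P i * ωinv))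
    (hR1 : (ω + (m : ℂ) • (1 : A)) * R = 1)
    (hR2 : R * (ω + (m : ℂ) • (1 : A)) = 1)
    (H : A) (L J N M K : Fin 3 → A)
    (hH : H = Λ * ω)
    (hL : ∀ i, L i = ∑ j, ∑ k, eps i j k • (Q j * P k))
    (hJ : ∀ i, J i = L i + S i)
    (hN : ∀ i, N i = Λ * (∑ j, ∑ k, eps i j k • (S j * P k)) * R)
    (hM : ∀ i, M i = (t : ℂ) • P i - (2 : ℂ)⁻¹ • (Q i * H + H * Q i))
    (hK : ∀ i, K i = M i + N i)
    :
    ∀ i j, ⁅K i, K j⁆ = -((Complex.I * (ℏ : ℂ)) • ∑ k, eps i j k • J k) := by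
  simp only [← commute_iff_lie_eq] at hQQ hPP hQS hPS hΛQ hΛP hΛS hΛω hωP hωS
  let F : FoldySystem A (Complex.I * (ℏ : ℂ)) (m : ℂ) :=
    { Q, P, S, Λ
      ω := ⟨ω, ωinv, hωinv1, hωinv2⟩
      D := ⟨ω + (m : ℂ) • 1, R, hR1, hR2⟩
      commute_Q_Q := hQQ, commute_P_P := hPP
      commute_Q_S := hQS, commute_P_S := hPS
      commute_Λ_Q := hΛQ, commute_Λ_P := hΛP, commute_Λ_S := hΛS, commute_Λ_ω := hΛω
      commute_ω_P := hωP, commute_ω_S := hωS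
      lie_Q_P := fun i j ↦ by rw [hQP, kdelta, mul_ite, mul_one, mul_zero]
      opCross_S_S := lie_eq_smul_sum_eps_iff.1 hSS
      Λ_mul_self := hΛΛ
      ω_mul_self := by rw [hω2, Matrix.vec3_dotProduct]
      lie_Q_ω := hQω
      D_eq := rfl }
  have hKF : K = F.boost t (Complex.I * (ℏ : ℂ) / 2) := funext fun i ↦ by
    rw [hK, hM, hN, hH, sum_eps_smul_mul, F.boost_half_eq]; rfl
  have hJF : J = F.angularMomentum := funext fun i ↦ by
    rw [hJ, hL, sum_eps_smul_mul]; rfl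
  simp only [← neg_smul]
  rw [lie_eq_smul_sum_eps_iff, hKF, hJF, neg_smul]
  exact foldy_boost_boost_relation_general F _ _
end
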